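/- Let (V₁, V₂) be a modified-bishift-semigroup on a complex Hilbert space H. Then there exist a Hilbert space F and a unitary Z : H → L²(ℝ² ∖ ℝ₊², F) such that Z V_{1,t} Z* = M_{1,t}^F and Z V_{2,t} Z* = M_{2,t}^F for all t ≥ 0. -/

import Mathlib

open MeasureTheory ContinuousLinearMap
open scoped ENNReal NNReal InnerProductSpace ComplexInnerProductSpace

noncomputable section

section SemigroupDefs

variable {G : Type} [NormedAddCommGroup G] [InnerProductSpace ℂ G] [CompleteSpace G]

/-- A (C₀-) strongly continuous one-parameter semigroup of bounded operators. -/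
def IsC0Semigroup (V : ℝ≥0 → G →L[ℂ] G) : Prop :=
  V 0 = 1 ∧ (∀ s t : ℝ≥0, V (s + t) = V s ∘L V t) ∧ ∀ x : G, Continuous fun t : ℝ≥0 => V t x

/-- A C₀-semigroup of isometries. -/
def IsIsometrySemigroup (V : ℝ≥0 → G →L[ℂ] G) : Prop :=
  IsC0Semigroup V ∧ ∀ (t : ℝ≥0) (x : G), ‖V t x‖ = ‖x‖

/-- The closed subspace `L` reduces the semigroup `V`: it is invariant under every `V t`
and every `(V t)*`. -/
def ReducedBy (V : ℝ≥0 → G →L[ℂ] G) (L : Submodule ℂ G) : Prop :=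
  (∀ t : ℝ≥0, ∀ x ∈ L, V t x ∈ L) ∧ ∀ t : ℝ≥0, ∀ x ∈ L, adjoint (V t) x ∈ L

/-- `T` restricts to a unitary operator on the subspace `L`. -/
def RestrictsToUnitaryOn (T : G →L[ℂ] G) (L : Submodule ℂ G) : Prop :=
  (∀ x ∈ L, T x ∈ L) ∧ (∀ x ∈ L, ‖T x‖ = ‖x‖) ∧ ∀ y ∈ L, ∃ x ∈ L, T x = y

/-- Every `V t` restricts to a unitary operator on the subspace `L`. -/
def IsUnitarySemigroupOn (V : ℝ≥0 → G →L[ℂ] G) (L : Submodule ℂ G) : Prop :=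
  ∀ t : ℝ≥0, RestrictsToUnitaryOn (V t) L

/-- A unitary C₀-semigroup: every `V t` is a surjective isometry. -/
def IsUnitarySemigroup (V : ℝ≥0 → G →L[ℂ] G) : Prop :=
  IsC0Semigroup V ∧ ∀ t : ℝ≥0, (∀ x : G, ‖V t x‖ = ‖x‖) ∧ Function.Surjective (V t)

/-- `V` is completely nonunitary on the subspace `K`: there is no nonzero closed subspace
of `K` reducing `V` on which every `V t` restricts to a unitary. -/
def IsCnuOn (V : ℝ≥0 → G →L[ℂ] G) (K : Submodule ℂ G) : Prop :=
  ∀ L : Submodule ℂ G, IsClosed (L : Set G) → L ≤ K → ReducedBy V L →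
    IsUnitarySemigroupOn V L → L = ⊥

/-- A completely nonunitary semigroup. -/
def IsCnu (V : ℝ≥0 → G →L[ℂ] G) : Prop := IsCnuOn V ⊤

/-- Two semigroups commute. -/
def SgCommute (V1 V2 : ℝ≥0 → G →L[ℂ] G) : Prop :=
  ∀ t s : ℝ≥0, V1 t ∘L V2 s = V2 s ∘L V1 t

/-- Two semigroups doubly commute. -/
def SgDoublyCommute (V1 V2 : ℝ≥0 → G →L[ℂ] G) : Prop :=
  SgCommute V1 V2 ∧ ∀ t s : ℝ≥0, V1 t ∘L adjoint (V2 s) = adjoint (V2 s) ∘L V1 t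

/-- A completely nonunitary pair of semigroups: no nonzero closed subspace reduces both
semigroups in such a way that both restrict to unitary semigroups. -/
def IsCnuPair (V1 V2 : ℝ≥0 → G →L[ℂ] G) : Prop :=
  ∀ L : Submodule ℂ G, IsClosed (L : Set G) → ReducedBy V1 L → ReducedBy V2 L →
    IsUnitarySemigroupOn V1 L → IsUnitarySemigroupOn V2 L → L = ⊥

/-- A strongly continuous one-parameter unitary group. -/
def IsUnitaryGroup (U : ℝ → G →L[ℂ] G) : Prop :=
  U 0 = 1 ∧ (∀ s t : ℝ, U (s + t) = U s ∘L U t) ∧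
  (∀ (t : ℝ) (x : G), ‖U t x‖ = ‖x‖) ∧ (∀ t : ℝ, Function.Surjective (U t)) ∧
  ∀ x : G, Continuous fun t : ℝ => U t x

/-- Two subspaces are mutually orthogonal. -/
def OrthoSubspaces (A B : Submodule ℂ G) : Prop :=
  ∀ x ∈ A, ∀ y ∈ B, ⟪x, y⟫_ℂ = 0

end SemigroupDefs

/-- The closed first quadrant `ℝ₊² ⊆ ℝ²`. -/
def QQ : Set (ℝ × ℝ) := {p | 0 ≤ p.1 ∧ 0 ≤ p.2}

/-- Lebesgue measure on `ℝ²` restricted to the quadrant `ℝ₊²`; `Lp F 2 nuQ` plays the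
role of `L²(ℝ₊², F)`. -/
def nuQ : Measure (ℝ × ℝ) := (volume : Measure (ℝ × ℝ)).restrict QQ

/-- Lebesgue measure on `ℝ²` restricted to `ℝ² ∖ ℝ₊²`; `Lp F 2 nuQc` plays the role of
`L²(ℝ² ∖ ℝ₊², F)`. -/
def nuQc : Measure (ℝ × ℝ) := (volume : Measure (ℝ × ℝ)).restrict QQᶜ

/-- `(V1, V2)` is a bishift-semigroup: it is jointly unitarily equivalent to the pair
`(𝒮₁^F, 𝒮₂^F)` of shift semigroups on `L²(ℝ₊², F)` for some Hilbert space `F`. -/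
def IsBishiftPair {G : Type} [NormedAddCommGroup G] [InnerProductSpace ℂ G] [CompleteSpace G]
    (V1 V2 : ℝ≥0 → G →L[ℂ] G) : Prop :=
  ∃ (F : Type) (_ : NormedAddCommGroup F) (_ : InnerProductSpace ℂ F) (_ : CompleteSpace F)
    (Z : G ≃ₗᵢ[ℂ] Lp F 2 nuQ),
    ∀ (t : ℝ≥0) (x : G),
      ((Z (V1 t x) : ℝ × ℝ → F) =ᵐ[nuQ]
        fun p => if (t : ℝ) ≤ p.1 then (Z x : ℝ × ℝ → F) (p.1 - (t : ℝ), p.2) else 0) ∧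
      ((Z (V2 t x) : ℝ × ℝ → F) =ᵐ[nuQ]
        fun p => if (t : ℝ) ≤ p.2 then (Z x : ℝ × ℝ → F) (p.1, p.2 - (t : ℝ)) else 0)

/-- `(U1, U2)` on the ambient space `G` is a minimal unitary extension of the commuting
pair of semigroups `(V1, V2)` living on the closed subspace `K` of `G`. -/
def IsMinimalUnitaryExtension {G : Type} [NormedAddCommGroup G] [InnerProductSpace ℂ G]
    [CompleteSpace G] (K : Submodule ℂ G) (V1 V2 : ℝ≥0 → ↥K →L[ℂ] ↥K)
    (U1 U2 : ℝ → G →L[ℂ] G) : Prop :=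
  IsUnitaryGroup U1 ∧ IsUnitaryGroup U2 ∧
  (∀ s t : ℝ, U1 s ∘L U2 t = U2 t ∘L U1 s) ∧
  (∀ (t : ℝ≥0) (h : ↥K),
    U1 (t : ℝ) (h : G) = (V1 t h : G) ∧ U2 (t : ℝ) (h : G) = (V2 t h : G)) ∧
  (Submodule.span ℂ
    {x : G | ∃ (t s : ℝ) (h : ↥K), x = U1 t (U2 s (h : G))}).topologicalClosure = ⊤

/-- The dual pair of `(V1, V2)` (with respect to the minimal unitary extension `(U1, U2)`
of `(V1, V2)` living on `Kᗮ`, given by `Ṽⱼ,t = (Ūⱼ,t)* |_{Kᗮ}`) is doubly commuting: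
`Ṽ₁,t Ṽ₂,s = Ṽ₂,s Ṽ₁,t` and `Ṽ₁,t (Ṽ₂,s)* = (Ṽ₂,s)* Ṽ₁,t`.  Here `(Ṽ₂,s)* x`, for
`x ∈ Kᗮ`, is characterised as the unique `w ∈ Kᗮ` with `U2 s x - w ∈ K`. -/
def DualDoublyCommutes {G : Type} [NormedAddCommGroup G] [InnerProductSpace ℂ G]
    [CompleteSpace G] (K : Submodule ℂ G) (U1 U2 : ℝ → G →L[ℂ] G) : Prop :=
  ∀ t s : ℝ, 0 ≤ t → 0 ≤ s → ∀ x ∈ Kᗮ,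
    (adjoint (U1 t) (adjoint (U2 s) x) = adjoint (U2 s) (adjoint (U1 t) x)) ∧
    ∀ w w' : G, w ∈ Kᗮ → U2 s x - w ∈ K → w' ∈ Kᗮ →
      U2 s (adjoint (U1 t) x) - w' ∈ K → adjoint (U1 t) w = w'

/-- The restriction of the semigroup `V` to an invariant subspace `L`. -/
def SGRestrict {G : Type} [NormedAddCommGroup G] [InnerProductSpace ℂ G]
    (V : ℝ≥0 → G →L[ℂ] G) (L : Submodule ℂ G)
    (hL : ∀ t : ℝ≥0, ∀ x ∈ L, V t x ∈ L) : ℝ≥0 → ↥L →L[ℂ] ↥L := fun t =>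
  { toLinearMap := (V t).toLinearMap.restrict (fun x hx => hL t x hx)
    cont := Continuous.subtype_mk ((V t).continuous.comp continuous_subtype_val) _ }

/-- The dual of the pair extended by the unitary groups `(U1, U2)`, i.e. the pair
`(Ṽ₁, Ṽ₂)` on `Kᗮ` given by `Ṽⱼ,t = (Ūⱼ,t)*|_{Kᗮ}`, is a bishift-semigroup: there is a
unitary `Z : Kᗮ → L²(ℝ₊², F)` carrying `(Ṽ₁, Ṽ₂)` to the pair of shift semigroups. -/
def DualIsBishift {G : Type} [NormedAddCommGroup G] [InnerProductSpace ℂ G]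
    [CompleteSpace G] (K : Submodule ℂ G) (U1 U2 : ℝ → G →L[ℂ] G) : Prop :=
  ∃ (F : Type) (_ : NormedAddCommGroup F) (_ : InnerProductSpace ℂ F) (_ : CompleteSpace F)
    (Z : ↥Kᗮ ≃ₗᵢ[ℂ] Lp F 2 nuQ),
    ∀ t : ℝ, 0 ≤ t → ∀ f g : Lp F 2 nuQ,
      (((g : ℝ × ℝ → F) =ᵐ[nuQ]
          fun p => if t ≤ p.1 then (f : ℝ × ℝ → F) (p.1 - t, p.2) else 0) →
        adjoint (U1 t) (Z.symm f : G) = (Z.symm g : G)) ∧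
      (((g : ℝ × ℝ → F) =ᵐ[nuQ]
          fun p => if t ≤ p.2 then (f : ℝ × ℝ → F) (p.1, p.2 - t) else 0) →
        adjoint (U2 t) (Z.symm f : G) = (Z.symm g : G))

/-- `(V1, V2)` is a modified-bishift-semigroup: a completely nonunitary commuting pair of
C₀-semigroups of isometries whose dual (with respect to a minimal unitary extension) is a
bishift-semigroup. -/
def IsModifiedBishift {G : Type} [NormedAddCommGroup G] [InnerProductSpace ℂ G]
    [CompleteSpace G] (V1 V2 : ℝ≥0 → G →L[ℂ] G) : Prop :=
  IsIsometrySemigroup V1 ∧ IsIsometrySemigroup V2 ∧ SgCommute V1 V2 ∧ IsCnuPair V1 V2 ∧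
  ∃ (Ebar : Type) (_ : NormedAddCommGroup Ebar) (_ : InnerProductSpace ℂ Ebar)
    (_ : CompleteSpace Ebar) (J : G →ₗᵢ[ℂ] Ebar) (U1 U2 : ℝ → Ebar →L[ℂ] Ebar),
    IsUnitaryGroup U1 ∧ IsUnitaryGroup U2 ∧
    (∀ s t : ℝ, U1 s ∘L U2 t = U2 t ∘L U1 s) ∧
    (∀ (t : ℝ≥0) (x : G), U1 (t : ℝ) (J x) = J (V1 t x) ∧ U2 (t : ℝ) (J x) = J (V2 t x)) ∧
    (Submodule.span ℂ
      {y : Ebar | ∃ (t s : ℝ) (x : G), y = U1 t (U2 s (J x))}).topologicalClosure = ⊤ ∧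
    DualIsBishift (LinearMap.range J.toLinearMap) U1 U2

section Helpers

/-- Uniqueness of unitary dilations: two families with equal Gram matrices. -/
lemma exists_unitary_of_gram {I E E' : Type} [NormedAddCommGroup E] [InnerProductSpace ℂ E]
    [CompleteSpace E] [NormedAddCommGroup E'] [InnerProductSpace ℂ E'] [CompleteSpace E']
    (a : I → E) (b : I → E') (hab : ∀ i j, ⟪a i, a j⟫_ℂ = ⟪b i, b j⟫_ℂ)
    (ha : ∀ y, (∀ i, ⟪a i, y⟫_ℂ = 0) → y = 0) (hb : ∀ y, (∀ i, ⟪b i, y⟫_ℂ = 0) → y = 0) :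
    ∃ W : E ≃ₗᵢ[ℂ] E', ∀ i, W (a i) = b i := by
  have dense : ∀ {E : Type} [NormedAddCommGroup E] [InnerProductSpace ℂ E]
      [CompleteSpace E] (a : I → E) (_ : ∀ y, (∀ i, ⟪a i, y⟫_ℂ = 0) → y = 0),
      DenseRange (Finsupp.linearCombination ℂ a) := by
    intro E _ _ _ a ha
    have h1 : (LinearMap.range (Finsupp.linearCombination ℂ a)).topologicalClosure = ⊤ := by
      rw [Submodule.topologicalClosure_eq_top_iff, Submodule.eq_bot_iff]
      intro y hy
      apply ha
      intro i
      rw [Submodule.mem_orthogonal] at hy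
      exact hy _ ⟨Finsupp.single i 1, by simp⟩
    have := (Submodule.dense_iff_topologicalClosure_eq_top).2 h1
    exact this
  have key : ∀ x : I →₀ ℂ, ⟪Finsupp.linearCombination ℂ b x, Finsupp.linearCombination ℂ b x⟫_ℂ
      = ⟪Finsupp.linearCombination ℂ a x, Finsupp.linearCombination ℂ a x⟫_ℂ := by
    intro x
    simp only [Finsupp.linearCombination_apply, Finsupp.sum, sum_inner, inner_sum,
      inner_smul_left, inner_smul_right, hab]
  have hn : ∀ x : I →₀ ℂ, ‖Finsupp.linearCombination ℂ b (LinearEquiv.refl ℂ _ x)‖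
      = ‖Finsupp.linearCombination ℂ a x‖ := by
    intro x
    have := key x
    rw [inner_self_eq_norm_sq_to_K, inner_self_eq_norm_sq_to_K] at this
    have h2 : ‖Finsupp.linearCombination ℂ b x‖ ^ 2 = ‖Finsupp.linearCombination ℂ a x‖ ^ 2 := by
      exact_mod_cast this
    exact (sq_eq_sq₀ (norm_nonneg _) (norm_nonneg _)).1 h2
  refine ⟨(LinearEquiv.refl ℂ (I →₀ ℂ)).extendOfIsometry _ _ (dense a ha) (dense b hb) hn, ?_⟩
  intro i
  have := LinearEquiv.extendOfIsometry_eq (LinearEquiv.refl ℂ (I →₀ ℂ))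
    (Finsupp.linearCombination ℂ a) (Finsupp.linearCombination ℂ b) (dense a ha) (dense b hb) hn (Finsupp.single i 1)
  simpa using this

lemma dilation_unique {M E E' : Type} [NormedAddCommGroup M] [InnerProductSpace ℂ M]
    [NormedAddCommGroup E] [InnerProductSpace ℂ E]
    [CompleteSpace E] [NormedAddCommGroup E'] [InnerProductSpace ℂ E'] [CompleteSpace E']
    (U : ℝ × ℝ → E →ₗᵢ[ℂ] E) (U' : ℝ × ℝ → E' →ₗᵢ[ℂ] E')
    (hU0 : ∀ x, U 0 x = x) (hU0' : ∀ x, U' 0 x = x)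
    (hU : ∀ v w x, U (v + w) x = U v (U w x)) (hU' : ∀ v w x, U' (v + w) x = U' v (U' w x))
    (k : M →ₗᵢ[ℂ] E) (k' : M →ₗᵢ[ℂ] E') (S : ℝ × ℝ → M → M)
    (hS : ∀ v, 0 ≤ v → ∀ f, U (-v) (k f) = k (S v f))
    (hS' : ∀ v, 0 ≤ v → ∀ f, U' (-v) (k' f) = k' (S v f))
    (hd : ∀ y, (∀ v f, ⟪U v (k f), y⟫_ℂ = 0) → y = 0)
    (hd' : ∀ y, (∀ v f, ⟪U' v (k' f), y⟫_ℂ = 0) → y = 0) :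
    ∃ W : E ≃ₗᵢ[ℂ] E', (∀ f, W (k f) = k' f) ∧ ∀ v x, W (U v x) = U' v (W x) := by
  have gram : ∀ {E : Type} [NormedAddCommGroup E] [InnerProductSpace ℂ E]
      (U : ℝ × ℝ → E →ₗᵢ[ℂ] E) (_ : ∀ v w x, U (v + w) x = U v (U w x))
      (k : M →ₗᵢ[ℂ] E) (_ : ∀ v, 0 ≤ v → ∀ f, U (-v) (k f) = k (S v f)) (v w : ℝ × ℝ) (f g : M),
      ⟪U v (k f), U w (k g)⟫_ℂ = ⟪S (v ⊔ w - v) f, S (v ⊔ w - w) g⟫_ℂ := by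
    intro E _ _ U hU k hS v w f g
    have h1 : U v (k f) = U (v ⊔ w) (k (S (v ⊔ w - v) f)) := by
      rw [← hS _ (sub_nonneg.2 le_sup_left), ← hU]; congr 2; abel
    have h2 : U w (k g) = U (v ⊔ w) (k (S (v ⊔ w - w) g)) := by
      rw [← hS _ (sub_nonneg.2 le_sup_right), ← hU]; congr 2; abel
    rw [h1, h2, LinearIsometry.inner_map_map, LinearIsometry.inner_map_map]
  obtain ⟨W, hW⟩ := exists_unitary_of_gram (I := (ℝ × ℝ) × M)
    (fun i => U i.1 (k i.2)) (fun i => U' i.1 (k' i.2))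
    (fun i j => by rw [gram U hU k hS, gram U' hU' k' hS'])
    (fun y hy => hd y fun v f => hy (v, f)) (fun y hy => hd' y fun v f => hy (v, f))
  refine ⟨W, fun f => ?_, fun v x => ?_⟩
  · have := hW (0, f)
    simpa [hU0, hU0'] using this
  · -- test against the total family
    rw [← sub_eq_zero]
    apply hd'
    intro w f
    have e1 : U' w (k' f) = W (U w (k f)) := (hW (w, f)).symm
    have e2 : U' w (k' f) = U' v (U' (w - v) (k' f)) := by
      rw [← hU']; congr 2; abel
    have e3 : U w (k f) = U v (U (w - v) (k f)) := by
      rw [← hU]; congr 2; abel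
    have e4 : U' (w - v) (k' f) = W (U (w - v) (k f)) := (hW (w - v, f)).symm
    rw [inner_sub_right, sub_eq_zero]
    rw [e1, LinearIsometryEquiv.inner_map_map, e3, LinearIsometry.inner_map_map, ← e3, ← e1, e2,
      LinearIsometry.inner_map_map, e4, LinearIsometryEquiv.inner_map_map]

variable {F : Type} [NormedAddCommGroup F] [InnerProductSpace ℂ F]

lemma mpAdd (v : ℝ × ℝ) : MeasurePreserving (fun p : ℝ × ℝ => p + v) volume volume :=
  measurePreserving_add_right volume v

/-- translation on `L²(ℝ²)` -/
def TT (F : Type) [NormedAddCommGroup F] [InnerProductSpace ℂ F]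
    (v : ℝ × ℝ) : Lp F 2 (volume : Measure (ℝ × ℝ)) →ₗᵢ[ℂ]
    Lp F 2 (volume : Measure (ℝ × ℝ)) :=
  Lp.compMeasurePreservingₗᵢ ℂ (fun p : ℝ × ℝ => p + v) (mpAdd v)

lemma TT_coe (v : ℝ × ℝ) (f : Lp F 2 (volume : Measure (ℝ × ℝ))) :
    (TT F v f : ℝ × ℝ → F) =ᵐ[volume] fun p => f (p + v) :=
  Lp.coeFn_compMeasurePreserving f (mpAdd v)

lemma ae_shift {P : ℝ × ℝ → Prop} (h : ∀ᵐ p ∂(volume : Measure (ℝ × ℝ)), P p) (v : ℝ × ℝ) :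
    ∀ᵐ p ∂(volume : Measure (ℝ × ℝ)), P (p + v) :=
  (mpAdd v).quasiMeasurePreserving.ae h

lemma TT_zero (f : Lp F 2 (volume : Measure (ℝ × ℝ))) : TT F 0 f = f := by
  apply Lp.ext
  filter_upwards [TT_coe 0 f] with p h
  simpa using h

lemma TT_add (v w : ℝ × ℝ) (f : Lp F 2 (volume : Measure (ℝ × ℝ))) :
    TT F (v + w) f = TT F v (TT F w f) := by
  apply Lp.ext
  filter_upwards [TT_coe (v + w) f, TT_coe v (TT F w f), ae_shift (TT_coe w f) v] with p h1 h2 h3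
  rw [h1, h2, h3, add_assoc]

lemma ext_memLp {s : Set (ℝ × ℝ)} (hs : MeasurableSet s)
    (f : Lp F 2 ((volume : Measure (ℝ × ℝ)).restrict s)) :
    MemLp (s.indicator f) 2 (volume : Measure (ℝ × ℝ)) :=
  (memLp_indicator_iff_restrict hs).2 (Lp.memLp f)

/-- extension by zero -/
def EX {s : Set (ℝ × ℝ)} (hs : MeasurableSet s) :
    Lp F 2 ((volume : Measure (ℝ × ℝ)).restrict s) →ₗᵢ[ℂ] Lp F 2 (volume : Measure (ℝ × ℝ)) where
  toFun f := (ext_memLp hs f).toLp _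
  map_add' f g := by
    apply Lp.ext
    have h := (ae_restrict_iff' hs).1 (Lp.coeFn_add f g)
    filter_upwards [(ext_memLp hs (f + g)).coeFn_toLp, (ext_memLp hs f).coeFn_toLp,
      (ext_memLp hs g).coeFn_toLp, h, Lp.coeFn_add ((ext_memLp hs f).toLp _)
        ((ext_memLp hs g).toLp _)] with p h1 h2 h3 h4 h5
    rw [h1, h5, Pi.add_apply, h2, h3]
    by_cases hp : p ∈ s
    · simp only [Set.indicator_of_mem hp]; exact h4 hp
    · simp [hp]
  map_smul' c f := by
    apply Lp.ext
    have h := (ae_restrict_iff' hs).1 (Lp.coeFn_smul c f)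
    filter_upwards [(ext_memLp hs (c • f)).coeFn_toLp, (ext_memLp hs f).coeFn_toLp,
      h, Lp.coeFn_smul c ((ext_memLp hs f).toLp _)] with p h1 h2 h4 h5
    rw [h1, RingHom.id_apply, h5, Pi.smul_apply, h2]
    by_cases hp : p ∈ s
    · simp only [Set.indicator_of_mem hp]; exact h4 hp
    · simp [hp]
  norm_map' f := by
    change ‖(ext_memLp hs f).toLp _‖ = ‖f‖
    rw [Lp.norm_toLp, eLpNorm_indicator_eq_eLpNorm_restrict hs, Lp.norm_def]

lemma EX_coe {s : Set (ℝ × ℝ)} (hs : MeasurableSet s)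
    (f : Lp F 2 ((volume : Measure (ℝ × ℝ)).restrict s)) :
    (EX hs f : ℝ × ℝ → F) =ᵐ[volume] s.indicator f :=
  (ext_memLp hs f).coeFn_toLp

/-- restriction -/
def RS (F : Type) [NormedAddCommGroup F] [InnerProductSpace ℂ F] (s : Set (ℝ × ℝ)) :
    Lp F 2 (volume : Measure (ℝ × ℝ)) →L[ℂ]
    Lp F 2 ((volume : Measure (ℝ × ℝ)).restrict s) :=
  LpToLpRestrictCLM (ℝ × ℝ) F ℂ volume 2 s

lemma RS_coe {s : Set (ℝ × ℝ)} (hs : MeasurableSet s) (f : Lp F 2 (volume : Measure (ℝ × ℝ))) :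
    ∀ᵐ p ∂(volume : Measure (ℝ × ℝ)), p ∈ s → (RS F s f : ℝ × ℝ → F) p = f p :=
  (ae_restrict_iff' hs).1 (LpToLpRestrictCLM_coeFn ℂ s f)

lemma RS_EX {s : Set (ℝ × ℝ)} (hs : MeasurableSet s)
    (f : Lp F 2 ((volume : Measure (ℝ × ℝ)).restrict s)) : RS F s (EX hs f) = f := by
  apply Lp.ext
  refine (ae_restrict_iff' hs).2 ?_
  filter_upwards [RS_coe hs (EX hs f), EX_coe hs f] with p h1 h2 hp
  rw [h1 hp, h2, Set.indicator_of_mem hp]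

lemma EX_RS {s : Set (ℝ × ℝ)} (hs : MeasurableSet s)
    (f : Lp F 2 (volume : Measure (ℝ × ℝ)))
    (hf : ∀ᵐ p ∂(volume : Measure (ℝ × ℝ)), p ∉ s → f p = 0) : EX hs (RS F s f) = f := by
  apply Lp.ext
  filter_upwards [RS_coe hs f, EX_coe hs (RS F s f), hf] with p h1 h2 h3
  rw [h2]
  by_cases hp : p ∈ s
  · rw [Set.indicator_of_mem hp, h1 hp]
  · rw [Set.indicator_of_notMem hp, h3 hp]

lemma inner_EX {s : Set (ℝ × ℝ)} (hs : MeasurableSet s)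
    (f : Lp F 2 ((volume : Measure (ℝ × ℝ)).restrict s))
    (g : Lp F 2 (volume : Measure (ℝ × ℝ))) : ⟪EX hs f, g⟫_ℂ = ⟪f, RS F s g⟫_ℂ := by
  rw [L2.inner_def, L2.inner_def, ← integral_indicator hs]
  apply integral_congr_ae
  filter_upwards [RS_coe hs g, EX_coe hs f] with p h1 h2
  by_cases hp : p ∈ s
  · simp [hp, h1 hp, h2]
  · simp [hp, h2]

lemma measQQ : MeasurableSet QQ :=
  (measurableSet_le measurable_const measurable_fst).inter
    (measurableSet_le measurable_const measurable_snd)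

/-- the shift on the quadrant -/
def SQ (F : Type) [NormedAddCommGroup F] [InnerProductSpace ℂ F] (v : ℝ × ℝ)
    (f : Lp F 2 ((volume : Measure (ℝ × ℝ)).restrict QQ)) :
    Lp F 2 ((volume : Measure (ℝ × ℝ)).restrict QQ) :=
  RS F QQ (TT F (-v) (EX measQQ f))

lemma EX_SQ (v : ℝ × ℝ) (hv : 0 ≤ v) (f : Lp F 2 ((volume : Measure (ℝ × ℝ)).restrict QQ)) :
    EX measQQ (SQ F v f) = TT F (-v) (EX measQQ f) := by
  apply EX_RS
  filter_upwards [TT_coe (-v) (EX measQQ f), ae_shift (EX_coe measQQ f) (-v)] with p h1 h2 hp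
  rw [h1, h2, Set.indicator_of_notMem]
  intro h
  apply hp
  have h3 := hv.1
  have h4 := hv.2
  simp only [QQ, Set.mem_ofPred_eq, Prod.fst_add, Prod.snd_add, Prod.fst_neg, Prod.snd_neg,
    Prod.fst_zero, Prod.snd_zero] at *
  constructor <;> linarith

lemma SQ_comp (v w : ℝ × ℝ) (hv : 0 ≤ v) (hw : 0 ≤ w)
    (f : Lp F 2 ((volume : Measure (ℝ × ℝ)).restrict QQ)) :
    SQ F v (SQ F w f) = SQ F (v + w) f := by
  apply (EX (F := F) measQQ).injective
  rw [EX_SQ v hv, EX_SQ w hw, EX_SQ _ (add_nonneg hv hw), ← TT_add]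
  congr 2
  abel

lemma SQ_coe (v : ℝ × ℝ) (f : Lp F 2 ((volume : Measure (ℝ × ℝ)).restrict QQ)) :
    (SQ F v f : ℝ × ℝ → F) =ᵐ[(volume : Measure (ℝ × ℝ)).restrict QQ]
      fun p => QQ.indicator f (p - v) := by
  refine (ae_restrict_iff' measQQ).2 ?_
  filter_upwards [RS_coe measQQ (TT F (-v) (EX measQQ f)), TT_coe (-v) (EX measQQ f),
    ae_shift (EX_coe measQQ f) (-v)] with p h0 h1 h2 hp
  rw [SQ, h0 hp, h1, h2, sub_eq_add_neg]

lemma TT_total (y : Lp F 2 (volume : Measure (ℝ × ℝ)))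
    (hy : ∀ v f, ⟪TT F v (EX measQQ f), y⟫_ℂ = 0) : y = 0 := by
  have h1 : ∀ n : ℕ, RS F QQ (TT F (-((n : ℝ), (n : ℝ))) y) = 0 := by
    intro n
    have h := hy ((n : ℝ), (n : ℝ)) (RS F QQ (TT F (-((n : ℝ), (n : ℝ))) y))
    rw [← LinearIsometry.inner_map_map (TT F (-((n : ℝ), (n : ℝ)))), ← TT_add, neg_add_cancel,
      TT_zero, inner_EX] at h
    exact inner_self_eq_zero.1 h
  have h2 : ∀ n : ℕ, ∀ᵐ p ∂(volume : Measure (ℝ × ℝ)), p + ((n : ℝ), (n : ℝ)) ∈ QQ → y p = 0 := by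
    intro n
    have a1 := RS_coe measQQ (TT F (-((n : ℝ), (n : ℝ))) y)
    rw [h1 n] at a1
    have a0 := (ae_restrict_iff' measQQ).1
      (Lp.coeFn_zero F 2 ((volume : Measure (ℝ × ℝ)).restrict QQ))
    filter_upwards [ae_shift a1 ((n : ℝ), (n : ℝ)), ae_shift a0 ((n : ℝ), (n : ℝ)),
      ae_shift (TT_coe (-((n : ℝ), (n : ℝ))) y) ((n : ℝ), (n : ℝ))] with p b1 b2 b3 hp
    have c := b1 hp
    rw [b2 hp, b3, add_neg_cancel_right] at c
    simpa using c.symm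
  apply Lp.ext
  filter_upwards [ae_all_iff.2 h2, Lp.coeFn_zero F 2 (volume : Measure (ℝ × ℝ))] with p hp h0
  rw [h0]
  obtain ⟨n, hn⟩ := exists_nat_ge (max (-p.1) (-p.2))
  apply hp n
  have := le_max_left (-p.1) (-p.2)
  have := le_max_right (-p.1) (-p.2)
  simp only [QQ, Set.mem_ofPred_eq, Prod.fst_add, Prod.snd_add]
  constructor <;> linarith

end Helpers

/-- Every modified-bishift-semigroup is jointly unitarily equivalent to the model pair
`(M₁ ⊗ I_F, M₂ ⊗ I_F)` on `L²(ℝ² ∖ ℝ₊², F)` for some Hilbert space `F`. -/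
theorem modified_bishift_model {H : Type} [NormedAddCommGroup H] [InnerProductSpace ℂ H]
    [CompleteSpace H] (V1 V2 : ℝ≥0 → H →L[ℂ] H) (hmb : IsModifiedBishift V1 V2) :
    ∃ (F : Type) (_ : NormedAddCommGroup F) (_ : InnerProductSpace ℂ F) (_ : CompleteSpace F)
      (Z : H ≃ₗᵢ[ℂ] Lp F 2 nuQc),
      ∀ (t : ℝ≥0) (x : H),
        ((Z (V1 t x) : ℝ × ℝ → F) =ᵐ[nuQc]
          fun p => if 0 ≤ p.2 ∧ -(t : ℝ) ≤ p.1 then 0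
            else (Z x : ℝ × ℝ → F) (p.1 + (t : ℝ), p.2)) ∧
        ((Z (V2 t x) : ℝ × ℝ → F) =ᵐ[nuQc]
          fun p => if 0 ≤ p.1 ∧ -(t : ℝ) ≤ p.2 then 0
            else (Z x : ℝ × ℝ → F) (p.1, p.2 + (t : ℝ))) := by
  obtain ⟨⟨-, hV1⟩, ⟨-, hV2⟩, -, hcnu, E, _, _, _, J, U1, U2, hU1, hU2, hcomm, hJ, -, hdual⟩ := hmb
  obtain ⟨F, _, _, _, Z, hZ⟩ := hdual
  change ↥(LinearMap.range J.toLinearMap)ᗮ ≃ₗᵢ[ℂ]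
    Lp F 2 ((volume : Measure (ℝ × ℝ)).restrict QQ) at Z
  have hKc : IsClosed ((LinearMap.range J.toLinearMap : Submodule ℂ E) : Set E) := by
    have := J.isometry.isClosedEmbedding.isClosed_range
    exact this
  have hKK : (LinearMap.range J.toLinearMap)ᗮᗮ = LinearMap.range J.toLinearMap := by
    rw [Submodule.orthogonal_orthogonal_eq_closure]
    exact hKc.submodule_topologicalClosure_eq
  let U : ℝ × ℝ → E →ₗᵢ[ℂ] E := fun v =>
    { toLinearMap := (U1 v.1 ∘L U2 v.2).toLinearMap
      norm_map' := fun x => by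
        change ‖U1 v.1 (U2 v.2 x)‖ = ‖x‖
        rw [hU1.2.2.1, hU2.2.2.1] }
  have hUdef : ∀ v x, U v x = U1 v.1 (U2 v.2 x) := fun _ _ => rfl
  have hU0 : ∀ x, U 0 x = x := by
    intro x
    simp [hUdef, hU1.1, hU2.1]
  have hUadd : ∀ v w x, U (v + w) x = U v (U w x) := by
    intro v w x
    have := congrArg (fun A => A (U2 w.2 x)) (hcomm w.1 v.2)
    simp only [ContinuousLinearMap.comp_apply] at this
    simp [hUdef, hU1.2.1, hU2.2.1, this]
  have hU1' : ∀ t x, U (t, 0) x = U1 t x := by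
    intro t x; simp [hUdef, hU2.1]
  have hU2' : ∀ t x, U (0, t) x = U2 t x := by
    intro t x; simp [hUdef, hU1.1]
  have hUinner : ∀ v x y, ⟪U v x, y⟫_ℂ = ⟪x, U (-v) y⟫_ℂ := by
    intro v x y
    rw [← LinearIsometry.inner_map_map (U (-v)), ← hUadd, neg_add_cancel, hU0]
  have hadj1 : ∀ t x, adjoint (U1 t) x = U1 (-t) x := by
    intro t x
    apply ext_inner_left ℂ
    intro y
    rw [adjoint_inner_right, ← hU1', hUinner, ← hU1']
    simp
  have hadj2 : ∀ t x, adjoint (U2 t) x = U2 (-t) x := by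
    intro t x
    apply ext_inner_left ℂ
    intro y
    rw [adjoint_inner_right, ← hU2', hUinner, ← hU2']
    simp
  let k : Lp F 2 ((volume : Measure (ℝ × ℝ)).restrict QQ) →ₗᵢ[ℂ] E :=
    (LinearMap.range J.toLinearMap)ᗮ.subtypeₗᵢ.comp Z.symm.toLinearIsometry
  have hk : ∀ f, k f = (Z.symm f : E) := fun _ => rfl
  have hS1 : ∀ t : ℝ, 0 ≤ t → ∀ f, U1 (-t) (k f) = k (SQ F (t, 0) f) := by
    intro t ht f
    rw [← hadj1]
    refine (hZ t ht f (SQ F (t, 0) f)).1 ?_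
    have h := (ae_restrict_iff' measQQ).1 (SQ_coe (t, 0) f)
    refine (ae_restrict_iff' measQQ).2 ?_
    filter_upwards [h] with p hp hq
    refine (hp hq).trans ?_
    have hq2 := hq.2
    by_cases htp : t ≤ p.1
    · rw [if_pos htp, Set.indicator_of_mem]
      · have : p - (t, (0 : ℝ)) = (p.1 - t, p.2) := by ext <;> simp
        rw [this]; rfl
      · constructor <;> simp <;> linarith
    · rw [if_neg htp, Set.indicator_of_notMem]
      rintro ⟨h1, -⟩
      simp at h1
      exact htp h1
  have hS2 : ∀ t : ℝ, 0 ≤ t → ∀ f, U2 (-t) (k f) = k (SQ F (0, t) f) := by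
    intro t ht f
    rw [← hadj2]
    refine (hZ t ht f (SQ F (0, t) f)).2 ?_
    have h := (ae_restrict_iff' measQQ).1 (SQ_coe (0, t) f)
    refine (ae_restrict_iff' measQQ).2 ?_
    filter_upwards [h] with p hp hq
    refine (hp hq).trans ?_
    have hq2 := hq.1
    by_cases htp : t ≤ p.2
    · rw [if_pos htp, Set.indicator_of_mem]
      · have : p - ((0 : ℝ), t) = (p.1, p.2 - t) := by ext <;> simp
        rw [this]; rfl
      · constructor <;> simp <;> linarith
    · rw [if_neg htp, Set.indicator_of_notMem]
      rintro ⟨-, h1⟩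
      simp at h1
      exact htp h1
  have hS : ∀ v, 0 ≤ v → ∀ f, U (-v) (k f) = k (SQ F v f) := by
    intro v hv f
    have h1 : 0 ≤ v.1 := hv.1
    have h2 : 0 ≤ v.2 := hv.2
    rw [hUdef]
    simp only [Prod.fst_neg, Prod.snd_neg]
    rw [hS2 _ h2, hS1 _ h1, SQ_comp (v.1, 0) (0, v.2) (Prod.mk_le_mk.2 ⟨h1, le_rfl⟩) (Prod.mk_le_mk.2 ⟨le_rfl, h2⟩)]
    simp
  have hS' : ∀ v, 0 ≤ v → ∀ f, TT F (-v) (EX measQQ f) = EX measQQ (SQ F v f) :=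
    fun v hv f => (EX_SQ v hv f).symm
  -- totality in the extension space, from complete nonunitarity
  have hd : ∀ y, (∀ v f, ⟪U v (k f), y⟫_ℂ = 0) → y = 0 := by
    let L : Submodule ℂ E := ⨅ i : (ℝ × ℝ) × Lp F 2 ((volume : Measure (ℝ × ℝ)).restrict QQ),
      LinearMap.ker (innerSL ℂ (U i.1 (k i.2))).toLinearMap
    have hL : ∀ y, y ∈ L ↔ ∀ v f, ⟪U v (k f), y⟫_ℂ = 0 := by
      intro y
      simp [L, Submodule.mem_iInf]
    have hLU : ∀ v, ∀ y ∈ L, U v y ∈ L := by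
      intro v y hy
      rw [hL] at hy ⊢
      intro w f
      have := hy (-v + w) f
      rw [hUadd, hUinner, neg_neg] at this
      exact this
    have hLK : ∀ y ∈ L, ∃ z, J z = y := by
      intro y hy
      have : y ∈ (LinearMap.range J.toLinearMap)ᗮᗮ := by
        rw [Submodule.mem_orthogonal]
        intro u hu
        have := (hL y).1 hy 0 (Z ⟨u, hu⟩)
        rw [hU0, hk] at this
        simpa using this
      rw [hKK] at this
      exact this
    have hLc : IsClosed (L : Set E) := by
      simp only [L, Submodule.coe_iInf]
      exact isClosed_iInter fun i => ContinuousLinearMap.isClosed_ker _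
    have main : ∀ (V : ℝ≥0 → H →L[ℂ] H) (e : ℝ → ℝ × ℝ) (_ : ∀ t, e (-t) = - e t)
        (_ : ∀ t x, ‖V t x‖ = ‖x‖) (_ : ∀ (t : ℝ≥0) x, U (e t) (J x) = J (V t x)),
        ReducedBy V (L.comap J.toLinearMap) ∧ IsUnitarySemigroupOn V (L.comap J.toLinearMap) := by
      intro V e he hV hJV
      have inv : ∀ t, ∀ x ∈ L.comap J.toLinearMap, V t x ∈ L.comap J.toLinearMap := by
        intro t x hx
        change J (V t x) ∈ L
        rw [← hJV]
        exact hLU _ _ hx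
      have sur : ∀ t, ∀ x ∈ L.comap J.toLinearMap, ∃ z ∈ L.comap J.toLinearMap, V t z = x := by
        intro t x hx
        have h1 : U (-(e t)) (J x) ∈ L := hLU _ _ hx
        obtain ⟨z, hz⟩ := hLK _ h1
        refine ⟨z, ?_, ?_⟩
        · change J z ∈ L
          rw [hz]; exact h1
        · apply J.injective
          rw [← hJV, hz, ← hUadd, add_neg_cancel, hU0]
      refine ⟨⟨inv, ?_⟩, fun t => ⟨inv t, fun x _ => hV t x, sur t⟩⟩
      intro t x hx
      obtain ⟨z, hz, rfl⟩ := sur t x hx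
      have : adjoint (V t) (V t z) = z := by
        have := (ContinuousLinearMap.norm_map_iff_adjoint_comp_self (V t)).1 (hV t)
        exact congrArg (fun A => A z) this
      rw [this]
      exact hz
    obtain ⟨r1, u1⟩ := main V1 (fun t => (t, 0)) (fun t => by simp) hV1
      (fun t x => by rw [hU1', (hJ t x).1])
    obtain ⟨r2, u2⟩ := main V2 (fun t => (0, t)) (fun t => by simp) hV2
      (fun t x => by rw [hU2', (hJ t x).2])
    have hbot := hcnu (L.comap J.toLinearMap) (hLc.preimage J.continuous) r1 r2 u1 u2
    intro y hy
    have hyL := (hL y).2 hy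
    obtain ⟨z, rfl⟩ := hLK y hyL
    have hz : z ∈ L.comap J.toLinearMap := hyL
    rw [hbot, Submodule.mem_bot] at hz
    rw [hz, map_zero]
  obtain ⟨W, hWk, hWU⟩ := dilation_unique U (TT F) hU0 TT_zero hUadd TT_add k (EX measQQ) (SQ F)
    hS hS' hd TT_total
  have hkJ : ∀ f x, ⟪k f, J x⟫_ℂ = 0 := by
    intro f x
    rw [hk]
    exact Submodule.inner_left_of_mem_orthogonal (K := LinearMap.range J.toLinearMap)
      ⟨x, rfl⟩ (Z.symm f).2
  have hRS0 : ∀ x, RS F QQ (W (J x)) = 0 := by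
    intro x
    have h := hkJ (RS F QQ (W (J x))) x
    rw [← LinearIsometryEquiv.inner_map_map W, hWk, inner_EX] at h
    exact inner_self_eq_zero.1 h
  have hW0 : ∀ x, ∀ᵐ p ∂(volume : Measure (ℝ × ℝ)), p ∈ QQ → (W (J x) : ℝ × ℝ → F) p = 0 := by
    intro x
    have a1 := RS_coe measQQ (W (J x))
    rw [hRS0 x] at a1
    have a0 := (ae_restrict_iff' measQQ).1
      (Lp.coeFn_zero F 2 ((volume : Measure (ℝ × ℝ)).restrict QQ))
    filter_upwards [a1, a0] with p b1 b2 hp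
    rw [← b1 hp, b2 hp, Pi.zero_apply]
  have hEX : ∀ x, EX measQQ.compl (RS F QQᶜ (W (J x))) = W (J x) := by
    intro x
    apply EX_RS
    filter_upwards [hW0 x] with p hp hq
    exact hp (not_not.1 hq)
  let Z0 : H →ₗᵢ[ℂ] Lp F 2 ((volume : Measure (ℝ × ℝ)).restrict QQᶜ) :=
    { toLinearMap := (RS F QQᶜ).toLinearMap ∘ₗ W.toLinearEquiv.toLinearMap ∘ₗ J.toLinearMap
      norm_map' := fun x => by
        change ‖RS F QQᶜ (W (J x))‖ = ‖x‖
        rw [← (EX measQQ.compl).norm_map, hEX, W.norm_map, J.norm_map] }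
  have hZ0 : ∀ x, Z0 x = RS F QQᶜ (W (J x)) := fun _ => rfl
  have hsurj : Function.Surjective Z0 := by
    intro g
    have h1 : W.symm (EX measQQ.compl g) ∈ (LinearMap.range J.toLinearMap)ᗮᗮ := by
      rw [Submodule.mem_orthogonal]
      intro u hu
      have hu' : u = k (Z ⟨u, hu⟩) := by rw [hk]; simp
      rw [hu', ← LinearIsometryEquiv.inner_map_map W, hWk, W.apply_symm_apply, L2.inner_def]
      rw [integral_eq_zero_of_ae]
      filter_upwards [EX_coe measQQ (Z ⟨u, hu⟩), EX_coe measQQ.compl g] with p h1 h2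
      rw [h1, h2]
      by_cases hp : p ∈ QQ
      · simp [hp]
      · simp [hp]
    rw [hKK] at h1
    obtain ⟨x, hx⟩ := h1
    refine ⟨x, ?_⟩
    have hx' : J x = W.symm (EX measQQ.compl g) := hx
    rw [hZ0, hx', W.apply_symm_apply, RS_EX]
  have hform : ∀ (v : ℝ × ℝ) (x y : H), U v (J x) = J y →
      ∀ᵐ p ∂(volume : Measure (ℝ × ℝ)), p ∈ QQᶜ → (Z0 y : ℝ × ℝ → F) p =
        QQᶜ.indicator (Z0 x) (p + v) := by
    intro v x y hxy
    have e : W (J y) = TT F v (W (J x)) := by rw [← hxy, hWU]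
    filter_upwards [RS_coe measQQ.compl (W (J y)), TT_coe v (W (J x)),
      ae_shift (EX_coe measQQ.compl (RS F QQᶜ (W (J x)))) v] with p h1 h2 h3 hp
    rw [hEX] at h3
    rw [hZ0, h1 hp, e, h2, h3, hZ0]
  refine ⟨F, inferInstance, inferInstance, inferInstance,
    LinearIsometryEquiv.ofSurjective Z0 hsurj, fun t x => ⟨?_, ?_⟩⟩
  · refine (ae_restrict_iff' measQQ.compl).2 ?_
    filter_upwards [hform ((t : ℝ), 0) x (V1 t x) (by rw [hU1', (hJ t x).1])] with p h hp
    refine (h hp).trans ?_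
    by_cases hc : 0 ≤ p.2 ∧ -(t : ℝ) ≤ p.1
    · rw [if_pos hc, Set.indicator_of_notMem]
      rw [Set.mem_compl_iff, not_not]
      constructor <;> simp <;> linarith [hc.1, hc.2]
    · rw [if_neg hc, Set.indicator_of_mem]
      · have : p + ((t : ℝ), (0 : ℝ)) = (p.1 + (t : ℝ), p.2) := by ext <;> simp
        rw [this]; rfl
      · rintro ⟨h1, h2⟩
        apply hc
        simp at h1 h2
        constructor <;> linarith
  · refine (ae_restrict_iff' measQQ.compl).2 ?_
    filter_upwards [hform (0, (t : ℝ)) x (V2 t x) (by rw [hU2', (hJ t x).2])] with p h hp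
    refine (h hp).trans ?_
    by_cases hc : 0 ≤ p.1 ∧ -(t : ℝ) ≤ p.2
    · rw [if_pos hc, Set.indicator_of_notMem]
      rw [Set.mem_compl_iff, not_not]
      constructor <;> simp <;> linarith [hc.1, hc.2]
    · rw [if_neg hc, Set.indicator_of_mem]
      · have : p + ((0 : ℝ), (t : ℝ)) = (p.1, p.2 + (t : ℝ)) := by ext <;> simp
        rw [this]; rfl
      · rintro ⟨h1, h2⟩
        apply hc
        simp at h1 h2
        constructor <;> linarith
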